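/- Let H be a Hopf algebra over K and let (M, μ) be a right H-Hopf module algebra, and let P_R : M → M be the map P_R(m) = ∑ m₍₀₎ · S(m₍₁₎). Then the kernel of P_R is a subalgebra of M, i.e. if P_R(m) = 0 and P_R(m') = 0 then P_R(mm') = 0. -/

import Mathlib

/-!
STATEMENT 6: For a right `H`-Hopf module algebra `(M, μ)`, the kernel of
`P_R(m) = ∑ m₍₀₎ · S(m₍₁₎)` is closed under multiplication.
-/

open TensorProduct Coalgebra HopfAlgebra LinearMap

/-! Since `S` is antimultiplicative, `h ▷ m = m · S(h)` is a left action of `H` on `M`, and it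
commutes with left multiplications of `M`. Hence `P_R(mm') = ∑ m₍₀₎ (m₍₁₎ ▷ P_R(m'))`, so `Ker P_R`
is even a left ideal of `M`. -/

section LeftAction

variable {R A M : Type*} [CommSemiring R]
variable [NonUnitalNonAssocSemiring A] [Module R A] [SMulCommClass R A A] [IsScalarTower R A A]
variable [NonUnitalNonAssocSemiring M] [Module R M] [SMulCommClass R M M] [IsScalarTower R M M]

variable {ρ : M ⊗[R] A →ₗ[R] M}
  (ρ_mul : ∀ (m : M) (a b : A), ρ (m ⊗ₜ (a * b)) = ρ (ρ (m ⊗ₜ b) ⊗ₜ a))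
  (mul_ρ : ∀ (m m' : M) (a : A), ρ ((m * m') ⊗ₜ a) = m * ρ (m' ⊗ₜ a))
include ρ_mul mul_ρ

theorem leftAction_tmul_mul (m : M) (a : A) (y : M ⊗[R] A) :
    ρ (m ⊗ₜ a * y) = m * ρ (ρ y ⊗ₜ a) := by
  induction y with
  | zero => simp only [mul_zero, map_zero, zero_tmul]
  | add y₁ y₂ hy₁ hy₂ => simp only [mul_add, map_add, add_tmul, hy₁, hy₂]
  | tmul m' b => rw [Algebra.TensorProduct.tmul_mul_tmul, mul_ρ, ρ_mul]

theorem leftAction_mul (x y : M ⊗[R] A) :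
    ρ (x * y) = mul' R M ((ρ ∘ₗ TensorProduct.mk R M A (ρ y)).lTensor M x) := by
  induction x with
  | zero => simp only [zero_mul, map_zero]
  | add x₁ x₂ hx₁ hx₂ => simp only [add_mul, map_add, hx₁, hx₂]
  | tmul m a =>
    rw [leftAction_tmul_mul ρ_mul mul_ρ, lTensor_tmul, mul'_apply, comp_apply,
      TensorProduct.mk_apply]

end LeftAction

section HopfAlgebra

variable {R H M : Type*} [CommSemiring R] [Semiring H] [HopfAlgebra R H]

section Module

variable [AddCommMonoid M] [Module R M]

/-- The map `m ⊗ h ↦ m · S(h)`, which turns a right action `act` of `H` into a left action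
`h ▷ m = m · S(h)`. The element acted upon is kept as the left tensor factor, to match the coaction
`M → M ⊗ H`. -/
def antipodeAction (act : M ⊗[R] H →ₗ[R] M) : M ⊗[R] H →ₗ[R] M :=
  act ∘ₗ (antipode R (A := H)).lTensor M

theorem antipodeAction_tmul (act : M ⊗[R] H →ₗ[R] M) (m : M) (h : H) :
    antipodeAction act (m ⊗ₜ h) = act (m ⊗ₜ antipode R h) :=
  rfl

theorem antipodeAction_mul_smul {act : M ⊗[R] H →ₗ[R] M}
    (act_mul : ∀ (m : M) (h h' : H), act (act (m ⊗ₜ h) ⊗ₜ h') = act (m ⊗ₜ (h * h')))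
    (m : M) (h h' : H) :
    antipodeAction act (m ⊗ₜ (h * h')) =
      antipodeAction act (antipodeAction act (m ⊗ₜ h') ⊗ₜ h) := by
  simp only [antipodeAction_tmul, antipode_mul_antidistrib, act_mul]

/-- The map `P_R(m) = ∑ m₍₀₎ · S(m₍₁₎)` attached to a right action `act` and a right coaction `δ`
of `H` on `M`. On a Hopf module it is the projection onto the coinvariants. -/
def coinvariantProjection (act : M ⊗[R] H →ₗ[R] M) (δ : M →ₗ[R] M ⊗[R] H) : M →ₗ[R] M :=
  antipodeAction act ∘ₗ δ

end Module

section NonUnitalNonAssocSemiring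

variable [NonUnitalNonAssocSemiring M] [Module R M] [SMulCommClass R M M] [IsScalarTower R M M]
  {act : M ⊗[R] H →ₗ[R] M} {δ : M →ₗ[R] M ⊗[R] H}
  (act_mul : ∀ (m : M) (h h' : H), act (act (m ⊗ₜ h) ⊗ₜ h') = act (m ⊗ₜ (h * h')))
  (mul_act : ∀ (m m' : M) (h : H), act ((m * m') ⊗ₜ h) = m * act (m' ⊗ₜ h))
  (δ_mul : ∀ m m' : M, δ (m * m') = δ m * δ m')
include act_mul mul_act δ_mul

theorem coinvariantProjection_mul (m m' : M) :
    coinvariantProjection act δ (m * m') =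
      mul' R M ((antipodeAction act ∘ₗ
        TensorProduct.mk R M H (coinvariantProjection act δ m')).lTensor M (δ m)) := by
  simp only [coinvariantProjection, comp_apply, δ_mul]
  exact leftAction_mul (antipodeAction_mul_smul act_mul) (fun m m' h ↦ mul_act m m' _) (δ m) (δ m')

theorem kernel_PR_subalgebra_of_rightHopfModuleAlgebra_general (m : M) {m' : M}
    (hm' : coinvariantProjection act δ m' = 0) :
    coinvariantProjection act δ (m * m') = 0 := by
  rw [coinvariantProjection_mul act_mul mul_act δ_mul, hm', map_zero, comp_zero, lTensor_zero,
    LinearMap.zero_apply, map_zero]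

end NonUnitalNonAssocSemiring

end HopfAlgebra

theorem kernel_PR_subalgebra_of_rightHopfModuleAlgebra
    (K : Type*) [Field K] [CharZero K]
    (H : Type*) [Ring H] [HopfAlgebra K H]
    (M : Type*) [NonUnitalRing M] [Module K M]
    [SMulCommClass K M M] [IsScalarTower K M M]
    -- right H-module structure on M
    (act : M ⊗[K] H →ₗ[K] M)
    (act_one : ∀ m : M, act (m ⊗ₜ[K] (1 : H)) = m)
    (act_mul : ∀ (m : M) (h h' : H),
      act (act (m ⊗ₜ[K] h) ⊗ₜ[K] h') = act (m ⊗ₜ[K] (h * h')))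
    -- right H-comodule structure on M
    (δ : M →ₗ[K] M ⊗[K] H)
    (coassoc : ∀ m : M,
      (TensorProduct.assoc K M H H) ((δ.rTensor H) (δ m)) =
        ((Coalgebra.comul (R := K) (A := H)).lTensor M) (δ m))
    (counital : ∀ m : M,
      (TensorProduct.rid K M) (((Coalgebra.counit (R := K) (A := H)).lTensor M) (δ m)) = m)
    -- Hopf module compatibility: δ(m · h) = δ(m)Δ(h)
    (hopf_compat : ∀ (m : M) (h : H),
      δ (act (m ⊗ₜ[K] h)) =
        (TensorProduct.map act (LinearMap.mul' K H))
          ((TensorProduct.tensorTensorTensorComm K M H H H)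
            (δ m ⊗ₜ[K] Coalgebra.comul h)))
    -- (mm') · h = m (m' · h)
    (mul_act : ∀ (m m' : M) (h : H),
      act ((m * m') ⊗ₜ[K] h) = m * act (m' ⊗ₜ[K] h))
    -- δ(mm') = ∑ m₍₀₎m'₍₀₎ ⊗ m₍₁₎m'₍₁₎
    (δ_mul : ∀ m m' : M,
      δ (m * m') =
        (TensorProduct.map (LinearMap.mul' K M) (LinearMap.mul' K H))
          ((TensorProduct.tensorTensorTensorComm K M H M H) (δ m ⊗ₜ[K] δ m'))) :
    -- `Ker P_R` is a subalgebra, where P_R(m) = ∑ m₍₀₎ · S(m₍₁₎)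
    let PR : M →ₗ[K] M := act ∘ₗ ((antipode (R := K) (A := H)).lTensor M) ∘ₗ δ
    ∀ m m' : M, PR m = 0 → PR m' = 0 → PR (m * m') = 0 := by
  intro PR m m' _ hm'
  exact kernel_PR_subalgebra_of_rightHopfModuleAlgebra_general act_mul mul_act
    (fun m m' ↦ (δ_mul m m').trans (LinearMap.congr_fun mul'_tensor (δ m ⊗ₜ δ m')).symm) m hm'
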